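/- Primal reformulation for ε-fairness: for a tolerance vector ε ∈ ℝ^m_+, the projection distance 𝒫_ε(P̂_N) := inf{ W_c(Q, P̂_N) : E_Q[𝒞(X) φ(U, E_Q[U])] ≤ ε componentwise } equals the optimal value of the linear program min_p (1/N) Σ_{i=1}^N p_i d(x_i) subject to p ∈ [0,1]^N and Σ_{i=1}^N (1 − 2𝒞(x_i)) φ(u_i, E_{P̂_N}[U]) p_i + Σ_{i=1}^N 𝒞(x_i) φ(u_i, E_{P̂_N}[U]) ≤ N ε componentwise, with both sides equal to +∞ when the constraint set is empty. -/

import Mathlib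

open BigOperators ENNReal MeasureTheory
open scoped Classical

noncomputable section

/-- Optimal transport cost between two measures, for a cost `c`:
`W_c(Q₁,Q₂) = inf { E_π[c(Z,Z')] : π a coupling of (Q₁,Q₂) }`. -/
def Wcost {Z : Type*} [MeasurableSpace Z] (c : Z → Z → ℝ≥0∞) (μ ν : Measure Z) : ℝ≥0∞ :=
  ⨅ π ∈ {π : Measure (Z × Z) |
      π.map Prod.fst = μ ∧ π.map Prod.snd = ν}, ∫⁻ p, c p.1 p.2 ∂π

/-- The transport cost on `𝒵 = 𝒳 × 𝒜 × 𝒴` built from a ground cost `c̄` on features: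
`c((x,a,y),(x',a',y')) = c̄(x,x') + ∞·|a−a'| + ∞·|y−y'|` (with `∞·0 = 0`). -/
def prodCost {X A : Type*} (cbar : X → X → ℝ≥0∞) :
    (X × A × Bool) → (X × A × Bool) → ℝ≥0∞ :=
  fun z z' => cbar z.1 z'.1 + (if z.2.1 = z'.2.1 then (0 : ℝ≥0∞) else ⊤) +
    (if z.2.2 = z'.2.2 then (0 : ℝ≥0∞) else ⊤)

/-- Distance to the set of features with the opposite classifier label:
`d(x) = inf { c̄(x,x') : 𝒞(x') = 1 − 𝒞(x) }`. -/
def dBoundary {X : Type*} (cbar : X → X → ℝ≥0∞) (C : X → ℝ) (x : X) : ℝ≥0∞ :=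
  ⨅ x' ∈ {x' | C x' = 1 - C x}, cbar x x'

/-- The set of distributions on `𝒵` under which the classifier `𝒞` is `ε`-fair:
`ℱ_ε = { Q : E_Q[𝒞(X) φ(U, E_Q[U])] ≤ ε componentwise }`. -/
def fairSetEps {d s m : ℕ} (𝒳 : Set (Fin d → ℝ)) (𝒜 : Type*) [MeasurableSpace 𝒜]
    (C : ↥𝒳 → ℝ) (ψ : 𝒜 × Bool → Fin s → ℝ)
    (φ : (Fin s → ℝ) → (Fin s → ℝ) → Fin m → ℝ) (ε : Fin m → ℝ) :
    Set (Measure (↥𝒳 × 𝒜 × Bool)) :=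
  {Q | IsProbabilityMeasure Q ∧
    ∀ k, (∫ z, C z.1 * φ (ψ z.2) (∫ z', ψ z'.2 ∂Q) k ∂Q) ≤ ε k}

/-- The empirical measure `P̂_N = N⁻¹ Σᵢ δ_{(xᵢ,aᵢ,yᵢ)}`. -/
def empMeasure {d : ℕ} {𝒳 : Set (Fin d → ℝ)} {𝒜 : Type*} [MeasurableSpace 𝒜]
    {N : ℕ} (x : Fin N → ↥𝒳) (a : Fin N → 𝒜) (y : Fin N → Bool) :
    Measure (↥𝒳 × 𝒜 × Bool) :=
  (N : ℝ≥0∞)⁻¹ • ∑ i, Measure.dirac (x i, a i, y i)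

/-!
A coupling of `Q` with a finitely supported law `∑ w i δ_{z i}` splits along the fibres over the
atoms `z i`, so it amounts to a decomposition `Q = ∑ w i μ i` into probability laws `μ i`, at cost
`∑ w i ∫ c(·, z i) dμ i`. Finite cost forces each `μ i` to keep the label of `z i`; then `E_Q[U]`
equals its value under the reference law, and fairness of `Q` depends on `μ i` only through the
probability `p i` that the predicted class differs from that of `z i`, on which it is affine. Among
the laws `μ i` with given `p i` the infimal cost is `p i * d (x i)`: leave mass `1 - p i` in place
and move mass `p i` to nearly optimal points across the decision boundary.
-/

open scoped NNReal

section FiniteMixture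

variable {ι Ω Z : Type*} [Fintype ι] [MeasurableSpace Ω] [MeasurableSpace Z]

lemma ne_top_of_sum_mul_ne_top {w : ι → ℝ≥0} (hw : ∀ i, w i ≠ 0) {f : ι → ℝ≥0∞}
    (h : ∑ i, w i * f i ≠ ⊤) (i : ι) : f i ≠ ⊤ := fun htop =>
  ENNReal.sum_ne_top.1 h i (Finset.mem_univ i)
    (by rw [htop, ENNReal.mul_top (ENNReal.coe_ne_zero.2 (hw i))])

lemma lintegral_sum_smul_measure (w : ι → ℝ≥0) (μ : ι → Measure Ω) (f : Ω → ℝ≥0∞) :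
    ∫⁻ q, f q ∂(∑ i, w i • μ i) = ∑ i, w i * ∫⁻ q, f q ∂μ i := by
  simp only [lintegral_finsetSum_measure, lintegral_smul_measure, ENNReal.smul_def, smul_eq_mul]

lemma integral_sum_smul_measure {E : Type*} [NormedAddCommGroup E] [NormedSpace ℝ E]
    (w : ι → ℝ≥0) {μ : ι → Measure Ω} {f : Ω → E} (hf : ∀ i, Integrable f (μ i)) :
    ∫ q, f q ∂(∑ i, w i • μ i) = ∑ i, (w i : ℝ) • ∫ q, f q ∂μ i := by
  rw [integral_finsetSum_measure fun i _ => (hf i).smul_measure_nnreal]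
  simp only [integral_smul_nnreal_measure, NNReal.smul_def]

lemma map_sum_smul_measure (w : ι → ℝ≥0) (μ : ι → Measure Ω) {f : Ω → Z} (hf : Measurable f) :
    (∑ i, w i • μ i).map f = ∑ i, w i • (μ i).map f := by
  simp only [← Measure.mapₗ_apply_of_measurable hf, map_sum, ENNReal.smul_def, map_smul]

lemma isProbabilityMeasure_sum_smul {w : ι → ℝ≥0} (hw : ∑ i, w i = 1) (μ : ι → Measure Ω)
    [∀ i, IsProbabilityMeasure (μ i)] : IsProbabilityMeasure (∑ i, w i • μ i) where
  measure_univ := by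
    simp only [Measure.finsetSum_apply, Measure.smul_apply, measure_univ, ENNReal.smul_def,
      smul_eq_mul, mul_one]
    exact_mod_cast hw

lemma Wcost_sum_smul_dirac_le (c : Z → Z → ℝ≥0∞) (w : ι → ℝ≥0) (z : ι → Z) (μ : ι → Measure Z)
    [∀ i, IsProbabilityMeasure (μ i)] :
    Wcost c (∑ i, w i • μ i) (∑ i, w i • Measure.dirac (z i)) ≤
      ∑ i, w i * ∫⁻ t, c t (z i) ∂μ i := by
  set π : Measure (Z × Z) := ∑ i, w i • (μ i).map (fun t => (t, z i))
  have hmeas (i) : Measurable fun t : Z => (t, z i) := measurable_prodMk_right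
  have hfst : π.map Prod.fst = ∑ i, w i • μ i := by
    simp [π, map_sum_smul_measure _ _ measurable_fst, Measure.map_map measurable_fst (hmeas _),
      Function.comp_def]
  have hsnd : π.map Prod.snd = ∑ i, w i • Measure.dirac (z i) := by
    simp [π, map_sum_smul_measure _ _ measurable_snd, Measure.map_map measurable_snd (hmeas _),
      Function.comp_def]
  calc Wcost c (∑ i, w i • μ i) (∑ i, w i • Measure.dirac (z i))
      ≤ ∫⁻ q, c q.1 q.2 ∂π := iInf₂_le π ⟨hfst, hsnd⟩
    _ = ∑ i, w i * ∫⁻ q, c q.1 q.2 ∂(μ i).map (fun t => (t, z i)) :=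
        lintegral_sum_smul_measure _ _ _
    _ ≤ ∑ i, w i * ∫⁻ t, c t (z i) ∂μ i := by
        gcongr
        exact lintegral_map_le _ _

variable [MeasurableSingletonClass Z]

lemma sum_smul_dirac_singleton (w : ι → ℝ≥0) (z : ι → Z) (t : Z) :
    (∑ i, w i • Measure.dirac (z i)) {t} = ∑ i, (w i : ℝ≥0∞) * ({z i} : Set Z).indicator 1 t := by
  simp only [Measure.finsetSum_apply, Measure.smul_apply, ENNReal.smul_def, smul_eq_mul,
    Measure.dirac_apply, Set.indicator_apply, Set.mem_singleton_iff, Pi.one_apply, eq_comm]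

lemma sum_smul_dirac_singleton_self_ne_zero {w : ι → ℝ≥0} (hw : ∀ i, w i ≠ 0) (z : ι → Z) (j : ι) :
    (∑ i, w i • Measure.dirac (z i)) {z j} ≠ 0 := by
  rw [sum_smul_dirac_singleton]
  intro h
  have := (Finset.sum_eq_zero_iff.1 h) j (Finset.mem_univ j)
  simp [hw j] at this

/-- The densities `𝟙_{z i} / ν {z i}` of the conditional laws given the atoms of
`ν = ∑ w i δ_{z i}` average to `1`; atoms may repeat, which the mass `ν {z i}` accounts for. -/
lemma ae_sum_mul_inv_mul_indicator_eq_one {w : ι → ℝ≥0} (hw : ∀ i, w i ≠ 0) (z : ι → Z)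
    {ν : Measure Z} (hν : ν = ∑ i, w i • Measure.dirac (z i)) :
    ∀ᵐ t ∂ν, ∑ i, (w i : ℝ≥0∞) * ((ν {z i})⁻¹ * ({z i} : Set Z).indicator 1 t) = 1 := by
  suffices h : ∀ j, ∑ i, (w i : ℝ≥0∞) * ((ν {z i})⁻¹ * ({z i} : Set Z).indicator 1 (z j)) = 1 by
    nth_rw 2 [hν]
    refine ae_finsetSum_measure_iff.2 fun j _ => Measure.ae_smul_measure ?_ _
    rw [ae_dirac_eq]
    exact h j
  intro j
  have hmass : ν {z j} = ∑ i, (w i : ℝ≥0∞) * ({z i} : Set Z).indicator 1 (z j) := by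
    rw [hν, sum_smul_dirac_singleton]
  have h0 : ν {z j} ≠ 0 := hν ▸ sum_smul_dirac_singleton_self_ne_zero hw z j
  have htop : ν {z j} ≠ ⊤ := by
    rw [hmass]
    exact ENNReal.sum_ne_top.2 fun i _ =>
      ENNReal.mul_ne_top ENNReal.coe_ne_top (by by_cases h : z j = z i <;> simp [h])
  calc ∑ i, (w i : ℝ≥0∞) * ((ν {z i})⁻¹ * ({z i} : Set Z).indicator 1 (z j))
      = ∑ i, (w i : ℝ≥0∞) * ({z i} : Set Z).indicator 1 (z j) * (ν {z j})⁻¹ := by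
        refine Finset.sum_congr rfl fun i _ => ?_
        by_cases h : z j = z i <;> simp [h]
    _ = 1 := by rw [← Finset.sum_mul, ← hmass, ENNReal.mul_inv_cancel h0 htop]

lemma exists_eq_sum_smul_of_map_eq_sum_smul_dirac {w : ι → ℝ≥0} (hw : ∀ i, w i ≠ 0) {z : ι → Z}
    {π : Measure Ω} {f : Ω → Z} (hf : Measurable f)
    (hπ : π.map f = ∑ i, w i • Measure.dirac (z i)) :
    ∃ ρ : ι → Measure Ω, (∀ i, IsProbabilityMeasure (ρ i)) ∧ (∀ i, ∀ᵐ q ∂ρ i, f q = z i) ∧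
      π = ∑ i, w i • ρ i := by
  have hmeas (i) : MeasurableSet (f ⁻¹' {z i}) := hf (measurableSet_singleton _)
  have hmass (i) : π.map f {z i} = π (f ⁻¹' {z i}) :=
    Measure.map_apply hf (measurableSet_singleton _)
  have : IsFiniteMeasure π := by
    rw [← Measure.isFiniteMeasure_map_iff hf.aemeasurable, hπ]
    infer_instance
  refine ⟨fun i => ProbabilityTheory.cond π (f ⁻¹' {z i}), fun i => ?_,
    fun i => ProbabilityTheory.ae_cond_mem (hmeas i), ?_⟩
  · refine ProbabilityTheory.cond_isProbabilityMeasure ?_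
    rw [← hmass, hπ]
    exact sum_smul_dirac_singleton_self_ne_zero hw z i
  · ext S _
    have hdensity := ae_of_ae_map hf.aemeasurable (ae_sum_mul_inv_mul_indicator_eq_one hw z hπ)
    simp only [hmass] at hdensity
    calc π S = ∫⁻ _ in S, 1 ∂π := by simp
      _ = ∫⁻ q in S, ∑ i, (w i : ℝ≥0∞) *
            ((π (f ⁻¹' {z i}))⁻¹ * (f ⁻¹' {z i}).indicator 1 q) ∂π :=
          lintegral_congr_ae (ae_restrict_of_ae (hdensity.mono fun q hq => hq.symm))
      _ = ∑ i, (w i : ℝ≥0∞) * ((π (f ⁻¹' {z i}))⁻¹ * π (f ⁻¹' {z i} ∩ S)) := by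
          have hind (i) : Measurable ((f ⁻¹' {z i}).indicator (1 : Ω → ℝ≥0∞)) :=
            measurable_one.indicator (hmeas i)
          rw [lintegral_finsetSum _ fun i _ => ((hind i).const_mul _).const_mul _]
          refine Finset.sum_congr rfl fun i _ => ?_
          rw [lintegral_const_mul _ ((hind i).const_mul _), lintegral_const_mul _ (hind i),
            lintegral_indicator_one (hmeas i), Measure.restrict_apply (hmeas i)]
      _ = (∑ i, w i • ProbabilityTheory.cond π (f ⁻¹' {z i})) S := by
          simp only [Measure.finsetSum_apply, Measure.smul_apply, ENNReal.smul_def, smul_eq_mul,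
            ProbabilityTheory.cond_apply (hmeas _)]

lemma exists_sum_smul_eq_map_fst_and_le_lintegral (c : Z → Z → ℝ≥0∞) {w : ι → ℝ≥0}
    (hw : ∀ i, w i ≠ 0) {z : ι → Z} {π : Measure (Z × Z)}
    (hsnd : π.map Prod.snd = ∑ i, w i • Measure.dirac (z i)) :
    ∃ μ : ι → Measure Z, (∀ i, IsProbabilityMeasure (μ i)) ∧ ∑ i, w i • μ i = π.map Prod.fst ∧
      ∑ i, w i * ∫⁻ t, c t (z i) ∂μ i ≤ ∫⁻ q, c q.1 q.2 ∂π := by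
  obtain ⟨ρ, hprob, hfiber, rfl⟩ :=
    exists_eq_sum_smul_of_map_eq_sum_smul_dirac hw measurable_snd hsnd
  refine ⟨fun i => (ρ i).map Prod.fst,
    fun i => Measure.isProbabilityMeasure_map measurable_fst.aemeasurable,
    (map_sum_smul_measure _ _ measurable_fst).symm, ?_⟩
  calc ∑ i, w i * ∫⁻ t, c t (z i) ∂(ρ i).map Prod.fst
      ≤ ∑ i, w i * ∫⁻ q, c q.1 (z i) ∂ρ i := by
        gcongr
        exact lintegral_map_le _ _
    _ = ∑ i, w i * ∫⁻ q, c q.1 q.2 ∂ρ i := by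
        congr! 2 with i
        exact lintegral_congr_ae ((hfiber i).mono fun q hq => by simp only [hq])
    _ = ∫⁻ q, c q.1 q.2 ∂(∑ i, w i • ρ i) := (lintegral_sum_smul_measure _ _ _).symm

/-- The cost need not be measurable: integrals against pushforwards only have to be bounded above,
and `lintegral_map_le` does this for every integrand. -/
lemma iInf_Wcost_sum_smul_dirac (c : Z → Z → ℝ≥0∞) {w : ι → ℝ≥0} (hw : ∀ i, w i ≠ 0) (z : ι → Z)
    (F : Set (Measure Z)) :
    ⨅ Q ∈ F, Wcost c Q (∑ i, w i • Measure.dirac (z i)) =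
      ⨅ μ ∈ {μ : ι → Measure Z | (∀ i, IsProbabilityMeasure (μ i)) ∧ ∑ i, w i • μ i ∈ F},
        ∑ i, w i * ∫⁻ t, c t (z i) ∂μ i := by
  apply le_antisymm
  · exact le_iInf₂ fun μ ⟨_, hF⟩ => (iInf₂_le _ hF).trans (Wcost_sum_smul_dirac_le c w z μ)
  · refine le_iInf₂ fun Q hQ => le_iInf₂ fun π ⟨hfst, hsnd⟩ => ?_
    obtain ⟨μ, hprob, hmix, hle⟩ := exists_sum_smul_eq_map_fst_and_le_lintegral c hw hsnd
    exact (iInf₂_le μ ⟨hprob, hmix.trans hfst ▸ hQ⟩).trans hle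

end FiniteMixture

section BinaryClassifier

variable {X B : Type*}

lemma ne_iff_eq_one_sub_of_binary {C : X → ℝ} (hC : ∀ x, C x = 0 ∨ C x = 1) {x x' : X} :
    C x' ≠ C x ↔ C x' = 1 - C x := by
  rcases hC x with h | h <;> rcases hC x' with h' | h' <;> norm_num [h, h']

/-- The transport cost on pairs (feature, label) that moves the feature at cost `cbar` and forbids
any change of the label; `prodCost` is the case where the label is the pair `(a, y)`. -/
def fiberCost (cbar : X → X → ℝ≥0∞) (z z' : X × B) : ℝ≥0∞ :=
  cbar z.1 z'.1 + if z.2 = z'.2 then 0 else ⊤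

lemma prodCost_eq_fiberCost {A : Type*} (cbar : X → X → ℝ≥0∞) :
    prodCost cbar = fiberCost (B := A × Bool) cbar := by
  funext z z'
  by_cases h₁ : z.2.1 = z'.2.1 <;> by_cases h₂ : z.2.2 = z'.2.2 <;>
    simp [prodCost, fiberCost, Prod.ext_iff, h₁, h₂]

variable [MeasurableSpace X] [MeasurableSpace B]

lemma ae_snd_eq_of_lintegral_fiberCost_ne_top [MeasurableSingletonClass B]
    {cbar : X → X → ℝ≥0∞} {μ : Measure (X × B)} {z₀ : X × B}
    (h : ∫⁻ z, fiberCost cbar z z₀ ∂μ ≠ ⊤) : ∀ᵐ z ∂μ, z.2 = z₀.2 := by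
  have hmeas : MeasurableSet {z : X × B | z.2 ≠ z₀.2} :=
    (measurable_snd (measurableSet_singleton z₀.2)).compl
  have hle : ⊤ * μ {z | z.2 ≠ z₀.2} ≤ ∫⁻ z, fiberCost cbar z z₀ ∂μ := by
    rw [← lintegral_indicator_const hmeas]
    refine lintegral_mono fun z => ?_
    by_cases hz : z.2 = z₀.2 <;> simp [fiberCost, hz]
  rw [ae_iff]
  by_contra hpos
  exact h (top_le_iff.1 (ENNReal.top_mul hpos ▸ hle))

/-- The mass that a law `μ` of (feature, label) puts on features classified differently from `x`.
It is the decision variable `p i` of the linear program when `μ` is the part of `Q` transported to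
the `i`-th atom. -/
def flipProb (C : X → ℝ) (x : X) (μ : Measure (X × B)) : ℝ :=
  μ.real {z | C z.1 ≠ C x}

variable {C : X → ℝ}

lemma flipProb_mem_Icc (x : X) (μ : Measure (X × B)) [IsProbabilityMeasure μ] :
    flipProb C x μ ∈ Set.Icc (0 : ℝ) 1 :=
  ⟨measureReal_nonneg, measureReal_le_one⟩

lemma integral_eq_add_mul_measureReal_ne {Ω : Type*} [MeasurableSpace Ω] {μ : Measure Ω}
    [IsProbabilityMeasure μ] {g : Ω → ℝ} (hg : ∀ q, g q = 0 ∨ g q = 1) (hgm : Measurable g) {c : ℝ}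
    (hc : c = 0 ∨ c = 1) : ∫ q, g q ∂μ = c + (1 - 2 * c) * μ.real {q | g q ≠ c} := by
  have hS : MeasurableSet {q | g q ≠ c} := (hgm (measurableSet_singleton c)).compl
  have hpointwise (q) : g q = c + (1 - 2 * c) * {q | g q ≠ c}.indicator 1 q := by
    rcases hg q with h | h <;> rcases hc with rfl | rfl <;> norm_num [Set.indicator_apply, h]
  calc ∫ q, g q ∂μ = ∫ q, (c + (1 - 2 * c) * {q | g q ≠ c}.indicator 1 q) ∂μ :=
        integral_congr_ae (.of_forall hpointwise)
    _ = c + (1 - 2 * c) * μ.real {q | g q ≠ c} := by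
        have hind : Integrable ({q | g q ≠ c}.indicator (1 : Ω → ℝ)) μ :=
          (integrable_const (1 : ℝ)).indicator hS
        rw [integral_add (integrable_const _) (hind.const_mul _), integral_const_mul,
          integral_indicator_one hS, integral_const, probReal_univ, one_smul]

lemma integral_classifier_eq (hC : ∀ x, C x = 0 ∨ C x = 1) (hCm : Measurable C) (x : X)
    (μ : Measure (X × B)) [IsProbabilityMeasure μ] :
    ∫ z, C z.1 ∂μ = C x + (1 - 2 * C x) * flipProb C x μ :=
  integral_eq_add_mul_measureReal_ne (fun z => hC z.1) (hCm.comp measurable_fst) (hC x)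

lemma flipProb_mul_dBoundary_le_lintegral_fiberCost {cbar : X → X → ℝ≥0∞}
    (hsymm : ∀ x x', cbar x x' = cbar x' x) (hC : ∀ x, C x = 0 ∨ C x = 1) (hCm : Measurable C)
    (z₀ : X × B) (μ : Measure (X × B)) [IsFiniteMeasure μ] :
    ENNReal.ofReal (flipProb C z₀.1 μ) * dBoundary cbar C z₀.1 ≤
      ∫⁻ z, fiberCost cbar z z₀ ∂μ := by
  have hmeas : MeasurableSet {z : X × B | C z.1 ≠ C z₀.1} :=
    (hCm.comp measurable_fst (measurableSet_singleton (C z₀.1))).compl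
  rw [flipProb, ofReal_measureReal, mul_comm, ← lintegral_indicator_const hmeas]
  refine lintegral_mono <| Set.indicator_le fun z hz => ?_
  have hflip : C z.1 = 1 - C z₀.1 := (ne_iff_eq_one_sub_of_binary hC).1 hz
  calc dBoundary cbar C z₀.1 ≤ cbar z₀.1 z.1 := iInf₂_le z.1 hflip
    _ = cbar z.1 z₀.1 := hsymm _ _
    _ ≤ fiberCost cbar z z₀ := le_self_add

/-- The law that keeps the feature of `z₀` with probability `1 - p`, replaces it by `x'` with
probability `p`, and never changes the label. -/
def flipMeasure (p : ℝ) (z₀ : X × B) (x' : X) : Measure (X × B) :=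
  ENNReal.ofReal (1 - p) • Measure.dirac z₀ + ENNReal.ofReal p • Measure.dirac (x', z₀.2)

lemma isProbabilityMeasure_flipMeasure {p : ℝ} (hp : p ∈ Set.Icc (0 : ℝ) 1) (z₀ : X × B) (x' : X) :
    IsProbabilityMeasure (flipMeasure p z₀ x') where
  measure_univ := by
    simp [flipMeasure, ← ENNReal.ofReal_add (sub_nonneg.2 hp.2) hp.1]

variable [MeasurableSingletonClass X] [MeasurableSingletonClass B]

lemma ae_flipMeasure_snd_eq (p : ℝ) (z₀ : X × B) (x' : X) :
    ∀ᵐ z ∂flipMeasure p z₀ x', z.2 = z₀.2 := by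
  rw [flipMeasure, ae_add_measure_iff]
  constructor <;> refine Measure.ae_smul_measure ?_ _ <;> simp [ae_dirac_eq]

lemma flipProb_flipMeasure {p : ℝ} (hp : 0 ≤ p) {z₀ : X × B} {x' : X}
    (hx' : p ≠ 0 → C x' ≠ C z₀.1) : flipProb C z₀.1 (flipMeasure p z₀ x') = p := by
  by_cases h0 : p = 0
  · simp [flipProb, flipMeasure, measureReal_def, h0]
  · simp [flipProb, flipMeasure, measureReal_def, hx' h0, hp]

lemma lintegral_fiberCost_flipMeasure {cbar : X → X → ℝ≥0∞} (hself : ∀ x, cbar x x = 0) (p : ℝ)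
    (z₀ : X × B) (x' : X) :
    ∫⁻ z, fiberCost cbar z z₀ ∂flipMeasure p z₀ x' = ENNReal.ofReal p * cbar x' z₀.1 := by
  simp [flipMeasure, fiberCost, lintegral_smul_measure, hself]

lemma exists_flipProb_eq_and_lintegral_fiberCost_le {cbar : X → X → ℝ≥0∞}
    (hsymm : ∀ x x', cbar x x' = cbar x' x) (hself : ∀ x, cbar x x = 0)
    (hC : ∀ x, C x = 0 ∨ C x = 1) {p : ℝ} (hp : p ∈ Set.Icc (0 : ℝ) 1) {z₀ : X × B}
    (hfin : ENNReal.ofReal p * dBoundary cbar C z₀.1 ≠ ⊤) {δ : ℝ≥0∞} (hδ : δ ≠ 0) :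
    ∃ μ : Measure (X × B), IsProbabilityMeasure μ ∧ (∀ᵐ z ∂μ, z.2 = z₀.2) ∧
      flipProb C z₀.1 μ = p ∧
      ∫⁻ z, fiberCost cbar z z₀ ∂μ ≤ ENNReal.ofReal p * dBoundary cbar C z₀.1 + δ := by
  suffices h : ∃ x', (p ≠ 0 → C x' ≠ C z₀.1) ∧
      ENNReal.ofReal p * cbar x' z₀.1 ≤ ENNReal.ofReal p * dBoundary cbar C z₀.1 + δ by
    obtain ⟨x', hflip, hcost⟩ := h
    exact ⟨flipMeasure p z₀ x', isProbabilityMeasure_flipMeasure hp z₀ x',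
      ae_flipMeasure_snd_eq p z₀ x', flipProb_flipMeasure hp.1 hflip,
      (lintegral_fiberCost_flipMeasure hself p z₀ x').trans_le hcost⟩
  by_cases h0 : p = 0
  · exact ⟨z₀.1, fun h => absurd h0 h, by simp [h0]⟩
  have hd : dBoundary cbar C z₀.1 ≠ ⊤ := fun h =>
    hfin (h ▸ ENNReal.mul_top (ENNReal.ofReal_pos.2 (hp.1.lt_of_ne' h0)).ne')
  obtain ⟨x', hx', hlt⟩ : ∃ x', C x' = 1 - C z₀.1 ∧
      cbar z₀.1 x' < dBoundary cbar C z₀.1 + δ := by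
    simpa [dBoundary, iInf_lt_iff] using ENNReal.lt_add_right hd hδ
  refine ⟨x', fun _ => (ne_iff_eq_one_sub_of_binary hC).2 hx', ?_⟩
  calc ENNReal.ofReal p * cbar x' z₀.1
      ≤ ENNReal.ofReal p * (dBoundary cbar C z₀.1 + δ) := by
        rw [hsymm]
        gcongr
    _ ≤ ENNReal.ofReal p * dBoundary cbar C z₀.1 + δ := by
        rw [mul_add]
        gcongr
        exact mul_le_of_le_one_left zero_le (ENNReal.ofReal_le_one.2 hp.2)

end BinaryClassifier

section Fairness

variable {ι X B E κ : Type*} [Fintype ι] [MeasurableSpace X] [MeasurableSpace B]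
  [NormedAddCommGroup E] [NormedSpace ℝ E]

/-- The laws of (feature, label) under which the classifier `C` is `ε`-fair, where `ψ` maps a label
to the statistic `U`; `fairSetEps` is the case where the label is the pair `(a, y)`. -/
def fairMeasures (C : X → ℝ) (ψ : B → E) (φ : E → E → κ → ℝ) (ε : κ → ℝ) :
    Set (Measure (X × B)) :=
  {Q | IsProbabilityMeasure Q ∧
    ∀ k, ∫ z, C z.1 * φ (ψ z.2) (∫ z', ψ z'.2 ∂Q) k ∂Q ≤ ε k}

/-- The feasible set of the linear program for the reference law `∑ w i δ_{z i}`: flipping the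
predicted class of the `i`-th atom with probability `p i` turns the expected prediction `C (x i)`
into `C (x i) + (1 - 2 * C (x i)) * p i`. -/
def feasibleFlips (w : ι → ℝ≥0) (z : ι → X × B) (C : X → ℝ) (ψ : B → E) (φ : E → E → κ → ℝ)
    (ε : κ → ℝ) : Set (ι → ℝ) :=
  {p | (∀ i, p i ∈ Set.Icc (0 : ℝ) 1) ∧
    ∀ k, ∑ i, w i * ((C (z i).1 + (1 - 2 * C (z i).1) * p i) *
      φ (ψ (z i).2) (∑ j, (w j : ℝ) • ψ (z j).2) k) ≤ ε k}

variable {w : ι → ℝ≥0} {z : ι → X × B} {μ : ι → Measure (X × B)}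
  [∀ i, IsProbabilityMeasure (μ i)]

lemma integral_comp_snd_sum_smul_measure [CompleteSpace E]
    (hlabel : ∀ i, ∀ᵐ t ∂μ i, t.2 = (z i).2) (g : B → E) :
    ∫ t, g t.2 ∂(∑ i, w i • μ i) = ∑ i, (w i : ℝ) • g (z i).2 := by
  have hconst (i) : (fun t : X × B => g t.2) =ᵐ[μ i] fun _ => g (z i).2 :=
    (hlabel i).mono fun t ht => congrArg g ht
  rw [integral_sum_smul_measure w fun i => (integrable_const _).congr (hconst i).symm]
  simp [integral_congr_ae (hconst _)]

variable {C : X → ℝ}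

lemma integral_classifier_mul_sum_smul_measure (hC : ∀ x, C x = 0 ∨ C x = 1) (hCm : Measurable C)
    (hlabel : ∀ i, ∀ᵐ t ∂μ i, t.2 = (z i).2) (g : B → ℝ) :
    ∫ t, C t.1 * g t.2 ∂(∑ i, w i • μ i) =
      ∑ i, w i * ((C (z i).1 + (1 - 2 * C (z i).1) * flipProb C (z i).1 (μ i)) * g (z i).2) := by
  have hconst (i) : (fun t : X × B => C t.1 * g t.2) =ᵐ[μ i] fun t => C t.1 * g (z i).2 :=
    (hlabel i).mono fun t ht => by simp only [ht]
  have hCint (i) : Integrable (fun t : X × B => C t.1) (μ i) :=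
    Integrable.of_bound (hCm.comp measurable_fst).aestronglyMeasurable 1 <|
      .of_forall fun t => by rcases hC t.1 with h | h <;> simp [h]
  rw [integral_sum_smul_measure w fun i => ((hCint i).mul_const _).congr (hconst i).symm]
  refine Finset.sum_congr rfl fun i _ => ?_
  rw [integral_congr_ae (hconst i), integral_mul_const, integral_classifier_eq hC hCm (z i).1,
    smul_eq_mul]

variable [CompleteSpace E] {ψ : B → E} {φ : E → E → κ → ℝ} {ε : κ → ℝ}

lemma sum_smul_mem_fairMeasures_iff (hw : ∑ i, w i = 1) (hC : ∀ x, C x = 0 ∨ C x = 1)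
    (hCm : Measurable C) (hlabel : ∀ i, ∀ᵐ t ∂μ i, t.2 = (z i).2) :
    ∑ i, w i • μ i ∈ fairMeasures C ψ φ ε ↔
      (fun i => flipProb C (z i).1 (μ i)) ∈ feasibleFlips w z C ψ φ ε := by
  have hmean := integral_comp_snd_sum_smul_measure (w := w) hlabel ψ
  simp only [fairMeasures, feasibleFlips, Set.mem_ofPred_eq, hmean, flipProb_mem_Icc,
    isProbabilityMeasure_sum_smul hw μ, implies_true, true_and]
  refine forall_congr' fun k => ?_
  rw [integral_classifier_mul_sum_smul_measure hC hCm hlabel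
    fun b => φ (ψ b) (∑ j, (w j : ℝ) • ψ (z j).2) k]

variable [MeasurableSingletonClass B] {cbar : X → X → ℝ≥0∞}

lemma exists_feasibleFlips_le_sum_lintegral_fiberCost (hsymm : ∀ x x', cbar x x' = cbar x' x)
    (hC : ∀ x, C x = 0 ∨ C x = 1) (hCm : Measurable C) (hw₀ : ∀ i, w i ≠ 0) (hw : ∑ i, w i = 1)
    (hfair : ∑ i, w i • μ i ∈ fairMeasures C ψ φ ε)
    (hfin : ∑ i, w i * ∫⁻ t, fiberCost cbar t (z i) ∂μ i ≠ ⊤) :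
    ∃ p ∈ feasibleFlips w z C ψ φ ε,
      ∑ i, w i * (ENNReal.ofReal (p i) * dBoundary cbar C (z i).1) ≤
        ∑ i, w i * ∫⁻ t, fiberCost cbar t (z i) ∂μ i := by
  have hlabel (i) : ∀ᵐ t ∂μ i, t.2 = (z i).2 :=
    ae_snd_eq_of_lintegral_fiberCost_ne_top (ne_top_of_sum_mul_ne_top hw₀ hfin i)
  refine ⟨_, (sum_smul_mem_fairMeasures_iff hw hC hCm hlabel).1 hfair, ?_⟩
  gcongr with i
  exact flipProb_mul_dBoundary_le_lintegral_fiberCost hsymm hC hCm (z i) (μ i)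

variable [MeasurableSingletonClass X]

lemma exists_fairMeasures_sum_lintegral_fiberCost_le (hsymm : ∀ x x', cbar x x' = cbar x' x)
    (hself : ∀ x, cbar x x = 0) (hC : ∀ x, C x = 0 ∨ C x = 1) (hCm : Measurable C)
    (hw₀ : ∀ i, w i ≠ 0) (hw : ∑ i, w i = 1) {p : ι → ℝ} (hp : p ∈ feasibleFlips w z C ψ φ ε)
    (hfin : ∑ i, w i * (ENNReal.ofReal (p i) * dBoundary cbar C (z i).1) ≠ ⊤)
    {δ : ℝ≥0∞} (hδ : δ ≠ 0) :
    ∃ μ : ι → Measure (X × B), (∀ i, IsProbabilityMeasure (μ i)) ∧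
      ∑ i, w i • μ i ∈ fairMeasures C ψ φ ε ∧
      ∑ i, w i * ∫⁻ t, fiberCost cbar t (z i) ∂μ i ≤
        ∑ i, w i * (ENNReal.ofReal (p i) * dBoundary cbar C (z i).1) + δ := by
  choose μ hprob hlabel hflip hcost using fun i =>
    exists_flipProb_eq_and_lintegral_fiberCost_le hsymm hself hC (hp.1 i)
      (ne_top_of_sum_mul_ne_top hw₀ hfin i) hδ
  refine ⟨μ, hprob, (sum_smul_mem_fairMeasures_iff hw hC hCm hlabel).2 ?_, ?_⟩
  · simpa only [hflip] using hp
  calc ∑ i, w i * ∫⁻ t, fiberCost cbar t (z i) ∂μ i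
      ≤ ∑ i, w i * (ENNReal.ofReal (p i) * dBoundary cbar C (z i).1 + δ) := by
        gcongr with i
        exact hcost i
    _ = ∑ i, w i * (ENNReal.ofReal (p i) * dBoundary cbar C (z i).1) + δ := by
        simp only [mul_add, Finset.sum_add_distrib, ← Finset.sum_mul, ← ENNReal.ofNNReal_finsetSum,
          hw, ENNReal.coe_one, one_mul]

theorem eps_fairness_projection_primal_reformulation_general
    (hsymm : ∀ x x', cbar x x' = cbar x' x) (hself : ∀ x, cbar x x = 0)
    (hC : ∀ x, C x = 0 ∨ C x = 1) (hCm : Measurable C) (ψ : B → E) (φ : E → E → κ → ℝ) (ε : κ → ℝ)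
    (hw₀ : ∀ i, w i ≠ 0) (hw : ∑ i, w i = 1) (z : ι → X × B) :
    ⨅ Q ∈ fairMeasures C ψ φ ε, Wcost (fiberCost cbar) Q (∑ i, w i • Measure.dirac (z i)) =
      ⨅ p ∈ feasibleFlips w z C ψ φ ε,
        ∑ i, w i * (ENNReal.ofReal (p i) * dBoundary cbar C (z i).1) := by
  rw [iInf_Wcost_sum_smul_dirac _ hw₀]
  apply le_antisymm
  · refine le_iInf₂ fun p hp => ENNReal.le_of_forall_pos_le_add fun δ hδ hfin => ?_
    obtain ⟨μ, hprob, hfair, hle⟩ := exists_fairMeasures_sum_lintegral_fiberCost_le hsymm hself hC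
      hCm hw₀ hw hp hfin.ne (ENNReal.coe_ne_zero.2 hδ.ne')
    exact (iInf₂_le μ ⟨hprob, hfair⟩).trans hle
  · refine le_iInf₂ fun μ ⟨hprob, hfair⟩ => ?_
    by_cases hfin : ∑ i, w i * ∫⁻ t, fiberCost cbar t (z i) ∂μ i = ⊤
    · exact hfin ▸ le_top
    obtain ⟨p, hp, hle⟩ :=
      exists_feasibleFlips_le_sum_lintegral_fiberCost hsymm hC hCm hw₀ hw hfair hfin
    exact (iInf₂_le p hp).trans hle

end Fairness

section EmpiricalMeasure

lemma fairSetEps_eq_fairMeasures {d s m : ℕ} (𝒳 : Set (Fin d → ℝ)) (𝒜 : Type*)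
    [MeasurableSpace 𝒜] (C : ↥𝒳 → ℝ) (ψ : 𝒜 × Bool → Fin s → ℝ)
    (φ : (Fin s → ℝ) → (Fin s → ℝ) → Fin m → ℝ) (ε : Fin m → ℝ) :
    fairSetEps 𝒳 𝒜 C ψ φ ε = fairMeasures C ψ φ ε :=
  rfl

variable {N : ℕ}

lemma empMeasure_eq_sum_smul_dirac {d : ℕ} {𝒳 : Set (Fin d → ℝ)} {𝒜 : Type*} [MeasurableSpace 𝒜]
    (hN : 0 < N) (x : Fin N → ↥𝒳) (a : Fin N → 𝒜) (y : Fin N → Bool) :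
    empMeasure x a y = ∑ i, (N : ℝ≥0)⁻¹ • Measure.dirac (x i, a i, y i) := by
  rw [empMeasure, ← Finset.smul_sum, ENNReal.smul_def, ENNReal.coe_inv (by positivity),
    ENNReal.coe_natCast]

lemma feasibleFlips_uniform {X B E κ : Type*} [NormedAddCommGroup E] [NormedSpace ℝ E]
    (hN : 0 < N) (z : Fin N → X × B) (C : X → ℝ) (ψ : B → E) (φ : E → E → κ → ℝ) (ε : κ → ℝ) :
    feasibleFlips (fun _ => (N : ℝ≥0)⁻¹) z C ψ φ ε =
      {p : Fin N → ℝ | (∀ i, p i ∈ Set.Icc (0 : ℝ) 1) ∧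
        ∀ k, (∑ i, (1 - 2 * C (z i).1) *
                φ (ψ (z i).2) ((N : ℝ)⁻¹ • ∑ j, ψ (z j).2) k * p i)
             + ∑ i, C (z i).1 * φ (ψ (z i).2) ((N : ℝ)⁻¹ • ∑ j, ψ (z j).2) k ≤ N * ε k} := by
  have hN' : (0 : ℝ) < N := Nat.cast_pos.2 hN
  ext p
  refine and_congr_right fun _ => forall_congr' fun k => ?_
  simp only [NNReal.coe_inv, NNReal.coe_natCast, ← Finset.smul_sum, ← Finset.mul_sum]
  rw [inv_mul_le_iff₀ hN', ← Finset.sum_add_distrib]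
  congr! 2 with i
  ring

end EmpiricalMeasure

/-- **Primal linear-programming reformulation for ε-fairness (Proposition 5).**
For a tolerance `ε ∈ ℝ^m_+`, the projection distance
`𝒫_ε(P̂_N) = inf { W_c(Q, P̂_N) : E_Q[𝒞(X) φ(U, E_Q[U])] ≤ ε }` equals the optimal
value of the linear program
`min_p { (1/N) Σᵢ pᵢ d(xᵢ) : p ∈ [0,1]^N,
  Σᵢ (1−2𝒞(xᵢ)) φ(uᵢ, E_{P̂_N}[U]) pᵢ + Σᵢ 𝒞(xᵢ) φ(uᵢ, E_{P̂_N}[U]) ≤ N ε }`,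
both sides being `+∞` when the corresponding constraint set is empty. -/
theorem eps_fairness_projection_primal_reformulation
    {d s m : ℕ} (𝒳 : Set (Fin d → ℝ)) (𝒜 : Type*)
    [MeasurableSpace 𝒜] [Fintype 𝒜] [MeasurableSingletonClass 𝒜]
    (cbar : ↥𝒳 → ↥𝒳 → ℝ≥0∞)
    (hc_lsc : LowerSemicontinuous (fun p : ↥𝒳 × ↥𝒳 => cbar p.1 p.2))
    (hc_symm : ∀ x x', cbar x x' = cbar x' x)
    (hc_zero : ∀ x x', cbar x x' = 0 ↔ x = x')
    (C : ↥𝒳 → ℝ) (hC_bin : ∀ x, C x = 0 ∨ C x = 1) (hC_meas : Measurable C)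
    (ψ : 𝒜 × Bool → Fin s → ℝ)
    (φ : (Fin s → ℝ) → (Fin s → ℝ) → Fin m → ℝ)
    (ε : Fin m → ℝ) (hε : ∀ k, 0 ≤ ε k)
    {N : ℕ} (hN : 0 < N)
    (x : Fin N → ↥𝒳) (a : Fin N → 𝒜) (y : Fin N → Bool) :
    -- 𝒫_ε(P̂_N)
    (⨅ Q ∈ fairSetEps 𝒳 𝒜 C ψ φ ε, Wcost (prodCost cbar) Q (empMeasure x a y))
    =
    -- optimal value of the finite linear program
    ⨅ p ∈ {p : Fin N → ℝ |
        (∀ i, p i ∈ Set.Icc (0:ℝ) 1) ∧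
        ∀ k, (∑ i, (1 - 2 * C (x i)) *
                φ (ψ (a i, y i)) ((N : ℝ)⁻¹ • ∑ j, ψ (a j, y j)) k * p i)
             + ∑ i, C (x i) * φ (ψ (a i, y i)) ((N : ℝ)⁻¹ • ∑ j, ψ (a j, y j)) k
             ≤ N * ε k},
      (N : ℝ≥0∞)⁻¹ * ∑ i, ENNReal.ofReal (p i) * dBoundary cbar C (x i) := by
  rw [fairSetEps_eq_fairMeasures, prodCost_eq_fiberCost, empMeasure_eq_sum_smul_dirac hN,
    ← feasibleFlips_uniform hN (fun i => (x i, a i, y i))]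
  have hN' : (N : ℝ≥0) ≠ 0 := Nat.cast_ne_zero.2 hN.ne'
  simpa only [ENNReal.coe_inv hN', ENNReal.coe_natCast, Finset.mul_sum] using
    eps_fairness_projection_primal_reformulation_general hc_symm (fun x => (hc_zero x x).2 rfl)
      hC_bin hC_meas ψ φ ε (fun _ => inv_ne_zero hN') (by simp [hN']) fun i => (x i, a i, y i)
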